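/- arXiv:2510.03845 — 2 statements merged into one kernel-verified Lean document; each statement's English description precedes it below -/
import Mathlib

section
/- Let N, T, r, K ∈ ℕ with 1 ≤ K ≤ r, and let R_B ≥ 0. Let J_1,…,J_K be a partition of [T], and let S_1,…,S_K ⊆ [N] be nonempty sets with |S_k| ≤ r. Let ℓ_1,…,ℓ_T ∈ ℝ^N with 0 ≤ ℓ_t(i) ≤ 1 for all t, i. For each k and each t ∈ J_k, let x_t ∈ Δ_N have support contained in S_k, let q_t^s ∈ Δ_N have support contained in S_k for each s ∈ S_k, let n_t ∈ [N], let β_t ∈ Δ_2, and let ε_t ≥ 0. Set w_t = ∑_{s∈S_k} x_t(s)·(q_t^s·ℓ_t). Suppose: (i) for every k and s ∈ S_k, max_{s'∈S_k} ∑_{t∈J_k} x_t(s)·(ℓ_t(s') − q_t^s·ℓ_t) ≤ √(|J_k| · log |S_k|); (ii) for every k and s ∈ S_k there exists j ∈ S_k with ∑_{t∈J_k} x_t(s)·ℓ_t(j) = max_{n∈[N]} ∑_{t∈J_k} x_t(s)·ℓ_t(n); (iii) |β_t(1)·ℓ_t(n_t) + β_t(2)·w_t − x_t·ℓ_t| ≤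 ε_t for all t; and (iv) ∑_{t=1}^T (β_t(1)·ℓ_t(n_t) + β_t(2)·w_t) ≥ ∑_{t=1}^T w_t − R_B. Then for every map σ : [N] → [N], ∑_{t=1}^T ∑_{i=1}^N x_t(i)·ℓ_t(σ(i)) − ∑_{t=1}^T x_t·ℓ_t ≤ √(r³ · T · log r) + R_B + ∑_{t=1}^T ε_t, where log is the natural logarithm. (Swap regret part of the combined simultaneous-regret theorem under a hidden game.) -/
/-- Swap regret part of the combined simultaneous-regret theorem under a
hidden game: with phases `J k`, candidate sets `S k` of size at most `r`,
per-copy external regret at most `√(|J k| * log |S k|)`, best responses over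
`[N]` attained inside `S k`, `ε t`-approximate fixed points, and a master with
external regret at most `R_B` against its second expert, the swap regret of
the plays is at most `√(r³ * T * log r) + R_B + ∑ t, ε t`. -/
theorem stmt_12 (N T r K : ℕ) (hK : 1 ≤ K) (hKr : K ≤ r) (RB : ℝ) (hRB : 0 ≤ RB)
    (J : Fin K → Finset (Fin T))
    (hdisj : ∀ k k' : Fin K, k ≠ k' → Disjoint (J k) (J k'))
    (hcover : ∀ t : Fin T, ∃ k, t ∈ J k)
    (S : Fin K → Finset (Fin N))
    (hSne : ∀ k, (S k).Nonempty) (hScard : ∀ k, (S k).card ≤ r)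
    (ℓ : Fin T → Fin N → ℝ) (hℓ : ∀ t i, 0 ≤ ℓ t i ∧ ℓ t i ≤ 1)
    (x : Fin T → Fin N → ℝ) (hx : ∀ t, x t ∈ stdSimplex ℝ (Fin N))
    (hxsupp : ∀ k : Fin K, ∀ t ∈ J k, ∀ i ∉ S k, x t i = 0)
    (q : Fin T → Fin N → Fin N → ℝ) (hq : ∀ t s, q t s ∈ stdSimplex ℝ (Fin N))
    (hqsupp : ∀ k : Fin K, ∀ t ∈ J k, ∀ s ∈ S k, ∀ j ∉ S k, q t s j = 0)
    (n : Fin T → Fin N)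
    (β : Fin T → Fin 2 → ℝ) (hβ : ∀ t, β t ∈ stdSimplex ℝ (Fin 2))
    (ε : Fin T → ℝ) (hε : ∀ t, 0 ≤ ε t)
    (w : Fin T → ℝ)
    (hw : ∀ k : Fin K, ∀ t ∈ J k, w t = ∑ s ∈ S k, x t s * ∑ j, q t s j * ℓ t j)
    (hcopy : ∀ k : Fin K, ∀ s ∈ S k, ∀ s' ∈ S k,
      ∑ t ∈ J k, x t s * (ℓ t s' - ∑ j, q t s j * ℓ t j)
        ≤ Real.sqrt ((J k).card * Real.log ((S k).card)))
    (hBR : ∀ k : Fin K, ∀ s ∈ S k, ∃ j ∈ S k,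
      ∑ t ∈ J k, x t s * ℓ t j = ⨆ m : Fin N, ∑ t ∈ J k, x t s * ℓ t m)
    (hfix : ∀ t, |β t 0 * ℓ t (n t) + β t 1 * w t - ∑ i, x t i * ℓ t i| ≤ ε t)
    (hmaster : ∑ t, (β t 0 * ℓ t (n t) + β t 1 * w t) ≥ (∑ t, w t) - RB) :
    ∀ σ : Fin N → Fin N,
      (∑ t, ∑ i, x t i * ℓ t (σ i)) - ∑ t, ∑ i, x t i * ℓ t i
        ≤ Real.sqrt ((r : ℝ) ^ 3 * T * Real.log r) + RB + ∑ t, ε t := by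
  intro σ
  have hU : (Finset.univ : Finset (Fin T)) = Finset.univ.biUnion J := by
    ext t
    simpa using hcover t
  have hsplit : ∀ f : Fin T → ℝ, ∑ t, f t = ∑ k, ∑ t ∈ J k, f t := by
    intro f
    rw [hU]
    exact Finset.sum_biUnion (fun a _ b _ hab => hdisj a b hab)
  have hr1 : 1 ≤ r := le_trans hK hKr
  have hlog : 0 ≤ Real.log r := Real.log_nonneg (by exact_mod_cast hr1)
  have hphase : ∀ k, ∑ t ∈ J k, ((∑ i, x t i * ℓ t (σ i)) - w t)
      ≤ r * (Real.sqrt (J k).card * Real.sqrt (Real.log r)) := by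
    intro k
    have h1 : ∑ t ∈ J k, ((∑ i, x t i * ℓ t (σ i)) - w t)
        = ∑ s ∈ S k, ∑ t ∈ J k, x t s * (ℓ t (σ s) - ∑ j, q t s j * ℓ t j) := by
      rw [Finset.sum_comm]
      refine Finset.sum_congr rfl fun t ht => ?_
      have h2 : ∑ i, x t i * ℓ t (σ i) = ∑ i ∈ S k, x t i * ℓ t (σ i) := by
        symm
        apply Finset.sum_subset (Finset.subset_univ _)
        intro i _ hi
        rw [hxsupp k t ht i hi, zero_mul]
      rw [h2, hw k t ht, ← Finset.sum_sub_distrib]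
      exact Finset.sum_congr rfl fun s _ => by ring
    have hcpos : 0 < (S k).card := Finset.card_pos.mpr (hSne k)
    have h3 : ∀ s ∈ S k, ∑ t ∈ J k, x t s * (ℓ t (σ s) - ∑ j, q t s j * ℓ t j)
        ≤ Real.sqrt (J k).card * Real.sqrt (Real.log r) := by
      intro s hs
      obtain ⟨j, hj, hje⟩ := hBR k s hs
      have h4 : ∑ t ∈ J k, x t s * ℓ t (σ s) ≤ ∑ t ∈ J k, x t s * ℓ t j := by
        rw [hje]
        exact le_ciSup (f := fun m : Fin N => ∑ t ∈ J k, x t s * ℓ t m)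
          (Set.finite_range _).bddAbove (σ s)
      have h5 := hcopy k s hs j hj
      have h6 : Real.sqrt ((J k).card * Real.log ((S k).card))
          ≤ Real.sqrt (J k).card * Real.sqrt (Real.log r) := by
        rw [← Real.sqrt_mul (Nat.cast_nonneg _)]
        apply Real.sqrt_le_sqrt
        apply mul_le_mul_of_nonneg_left _ (Nat.cast_nonneg _)
        exact Real.log_le_log (by exact_mod_cast hcpos) (by exact_mod_cast hScard k)
      simp only [mul_sub, Finset.sum_sub_distrib] at h5 ⊢
      linarith
    rw [h1]
    refine (Finset.sum_le_sum h3).trans ?_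
    rw [Finset.sum_const, nsmul_eq_mul]
    apply mul_le_mul_of_nonneg_right _ (by positivity)
    exact_mod_cast hScard k
  have hcardsum : ∑ k, ((J k).card : ℝ) = T := by
    have := hsplit (fun _ => 1)
    simpa using this.symm
  have hcs : (∑ k, Real.sqrt (J k).card) ^ 2 ≤ r * T := by
    have h := sq_sum_le_card_mul_sum_sq (s := (Finset.univ : Finset (Fin K)))
      (f := fun k => Real.sqrt (J k).card)
    have h' : ∑ k, Real.sqrt ((J k).card : ℝ) ^ 2 = T := by
      rw [← hcardsum]
      exact Finset.sum_congr rfl fun k _ => Real.sq_sqrt (Nat.cast_nonneg _)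
    rw [h', Finset.card_univ, Fintype.card_fin] at h
    refine h.trans (mul_le_mul_of_nonneg_right ?_ (Nat.cast_nonneg _))
    exact_mod_cast hKr
  have hmain : (∑ t, ∑ i, x t i * ℓ t (σ i)) - ∑ t, w t
      ≤ Real.sqrt ((r : ℝ) ^ 3 * T * Real.log r) := by
    rw [← Finset.sum_sub_distrib, hsplit]
    refine (Finset.sum_le_sum fun k _ => hphase k).trans ?_
    rw [← Finset.mul_sum, ← Finset.sum_mul]
    apply Real.le_sqrt_of_sq_le
    rw [mul_pow, mul_pow, Real.sq_sqrt hlog]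
    calc (r : ℝ) ^ 2 * ((∑ k, Real.sqrt (J k).card) ^ 2 * Real.log r)
        ≤ (r : ℝ) ^ 2 * ((r * T) * Real.log r) := by gcongr
      _ = _ := by ring
  have hf : ∑ t, (β t 0 * ℓ t (n t) + β t 1 * w t) - ∑ t, ∑ i, x t i * ℓ t i
      ≤ ∑ t, ε t := by
    rw [← Finset.sum_sub_distrib]
    exact Finset.sum_le_sum fun t _ => (le_abs_self _).trans (hfix t)
  linarith
end

section
/- There exists an absolute constant C > 0 such that the following holds. Let N, T ∈ ℕ with N ≥ 2 and T ≥ 1, let ℓ_1,…,ℓ_T ∈ ℝ^N be an arbitrary fixed (oblivious) sequence with 0 ≤ ℓ_t(i) ≤ 1 for all t, i, and set η = min(1, √((log N)/T)). Let r ∈ ℝ^N be a random vector whose coordinates are independent, each with exponential distribution of density η·e^{−η s} on [0,∞). For each t ∈ [T], let I_t ∈ [N] be the smallest index attaining max_{i∈[N]} (∑_{s=1}^{t−1} ℓ_s(i) + r(i)). Then E[ max_{i∈[N]} ∑_{t=1}^T ℓ_t(i) − ∑_{t=1}^T ℓ_t(I_t) ] ≤ C·√(T·log N). (Follow-the-Perturbed-Leader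 with exponential perturbations achieves O(√(T log N)) expected external regret using one optimization-oracle call per round.) -/
open MeasureTheory

namespace FPL

/-- One-dimensional (unnormalised) exponential density. -/
noncomputable def g (η c s : ℝ) : ℝ := if 0 ≤ s then η * Real.exp (-c * s) else 0

lemma g_eq (η c : ℝ) : g η c = (Set.Ici (0:ℝ)).indicator (fun s => η * Real.exp (-c * s)) := by
  funext s; simp [g, Set.indicator]

lemma g_meas (η c : ℝ) : Measurable (g η c) := by
  rw [g_eq]
  exact Measurable.indicator (by fun_prop) measurableSet_Ici

lemma g_nonneg {η : ℝ} (hη : 0 < η) (c s : ℝ) : 0 ≤ g η c s := by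
  unfold g; split_ifs <;> positivity

lemma g_integrable (η : ℝ) {c : ℝ} (hc : 0 < c) : Integrable (g η c) := by
  rw [g_eq, integrable_indicator_iff measurableSet_Ici, integrableOn_Ici_iff_integrableOn_Ioi]
  exact (integrableOn_exp_mul_Ioi (a := -c) (by linarith) 0).const_mul η

lemma g_integral (η : ℝ) {c : ℝ} (hc : 0 < c) : ∫ s, g η c s = η / c := by
  rw [g_eq, integral_indicator measurableSet_Ici, integral_Ici_eq_integral_Ioi,
    integral_const_mul, integral_exp_mul_Ioi (a := -c) (by linarith) 0]
  simp [div_eq_mul_inv]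

/-- Joint density. -/
noncomputable def F {N : ℕ} (η : ℝ) (r : Fin N → ℝ) : ℝ := ∏ i, g η η (r i)

lemma F_meas {N : ℕ} (η : ℝ) : Measurable (F η : (Fin N → ℝ) → ℝ) := by
  unfold F
  exact Finset.measurable_prod _ (fun i _ => (g_meas η η).comp (measurable_pi_apply i))

lemma F_nonneg {N : ℕ} {η : ℝ} (hη : 0 < η) (r : Fin N → ℝ) : 0 ≤ F η r :=
  Finset.prod_nonneg (fun i _ => g_nonneg hη _ _)

lemma F_integrable {N : ℕ} {η : ℝ} (hη : 0 < η) : Integrable (F η : (Fin N → ℝ) → ℝ) :=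
  Integrable.fintype_prod (f := fun _ => g η η) (μ := fun _ => volume)
    (fun _ => g_integrable η hη)

lemma F_integral {N : ℕ} {η : ℝ} (hη : 0 < η) : ∫ r : Fin N → ℝ, F η r = 1 := by
  unfold F
  rw [integral_fintype_prod_volume_eq_prod (fun _ => g η η)]
  simp [g_integral η hη, hη.ne']

lemma F_exp {N : ℕ} (η : ℝ) (i : Fin N) (r : Fin N → ℝ) :
    F η r * Real.exp (η * r i / 2)
      = ∏ j, (if j = i then g η (η/2) else g η η) (r j) := by
  unfold F
  rw [← Finset.mul_prod_erase _ _ (Finset.mem_univ i), ← Finset.mul_prod_erase _ (fun j => (if j = i then g η (η/2) else g η η) (r j)) (Finset.mem_univ i)]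
  have h1 : ∏ j ∈ Finset.univ.erase i, (if j = i then g η (η/2) else g η η) (r j)
      = ∏ j ∈ Finset.univ.erase i, g η η (r j) := by
    refine Finset.prod_congr rfl fun j hj => ?_
    rw [if_neg (Finset.ne_of_mem_erase hj)]
  rw [h1]
  have h2 : g η η (r i) * Real.exp (η * r i / 2) = g η (η/2) (r i) := by
    unfold g
    split_ifs
    · rw [mul_assoc, ← Real.exp_add]; congr 2; ring
    · simp
  simp only [if_true]
  rw [← h2]; ring

lemma F_exp_integrable {N : ℕ} {η : ℝ} (hη : 0 < η) (i : Fin N) :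
    Integrable (fun r : Fin N → ℝ => F η r * Real.exp (η * r i / 2)) := by
  simp_rw [F_exp]
  refine Integrable.fintype_prod (f := fun j => if j = i then g η (η/2) else g η η)
    (μ := fun _ => volume) (fun j => ?_)
  split_ifs
  · exact g_integrable η (by linarith)
  · exact g_integrable η hη

lemma F_exp_integral {N : ℕ} {η : ℝ} (hη : 0 < η) (i : Fin N) :
    ∫ r : Fin N → ℝ, F η r * Real.exp (η * r i / 2) = 2 := by
  simp_rw [F_exp]
  rw [integral_fintype_prod_volume_eq_prod (fun j => if j = i then g η (η/2) else g η η)]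
  rw [Finset.prod_eq_single i]
  · rw [if_pos rfl, g_integral η (by linarith)]; field_simp
  · intro j _ hj
    rw [if_neg hj, g_integral η hη, div_self hη.ne']
  · simp

lemma F_shift {N : ℕ} {η : ℝ} (hη : 0 < η) (i : Fin N) (r : Fin N → ℝ) :
    Real.exp (-η) * F η r ≤ F η (r + Pi.single i 1) := by
  have hqi : (r + Pi.single i 1 : Fin N → ℝ) i = r i + 1 := by simp
  have hqj : ∀ j, j ≠ i → (r + Pi.single i 1 : Fin N → ℝ) j = r j := fun j hj => by simp [hj]
  generalize (r + Pi.single i 1 : Fin N → ℝ) = q at hqi hqj ⊢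
  unfold F
  rw [← Finset.mul_prod_erase _ (fun j => g η η (r j)) (Finset.mem_univ i),
    ← Finset.mul_prod_erase _ (fun j => g η η (q j)) (Finset.mem_univ i)]
  have h1 : ∏ j ∈ Finset.univ.erase i, g η η (q j)
      = ∏ j ∈ Finset.univ.erase i, g η η (r j) := by
    refine Finset.prod_congr rfl fun j hj => ?_
    rw [hqj j (Finset.ne_of_mem_erase hj)]
  rw [h1, ← mul_assoc]
  refine mul_le_mul_of_nonneg_right ?_ (Finset.prod_nonneg fun j _ => g_nonneg hη _ _)
  by_cases h : 0 ≤ r i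
  · simp only [g, h, if_true, hqi]
    rw [if_pos (by linarith)]
    apply le_of_eq
    rw [mul_left_comm, ← Real.exp_add]; congr 2; ring
  · have : g η η (r i) = 0 := by simp [g, h]
    rw [this, mul_zero]
    exact g_nonneg hη _ _

/-- `i` is the smallest maximiser of `a + r`. -/
def Ld {N : ℕ} (a r : Fin N → ℝ) (i : Fin N) : Prop :=
  (∀ j, a j + r j ≤ a i + r i) ∧ (∀ j, a j + r j = a i + r i → i ≤ j)

lemma Ld_unique {N : ℕ} {a r : Fin N → ℝ} {i j : Fin N} (hi : Ld a r i) (hj : Ld a r j) :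
    i = j :=
  le_antisymm (hi.2 j (le_antisymm (hi.1 j) (hj.1 i))) (hj.2 i (le_antisymm (hj.1 i) (hi.1 j)))

lemma Ld_exists {N : ℕ} (hN : 0 < N) (a r : Fin N → ℝ) : ∃ i, Ld a r i := by
  haveI : Nonempty (Fin N) := ⟨⟨0, hN⟩⟩
  obtain ⟨m, hm⟩ := Finite.exists_max (fun i => a i + r i)
  let S : Finset (Fin N) := Finset.univ.filter fun i => a i + r i = a m + r m
  have hS : S.Nonempty := ⟨m, by simp [S]⟩
  refine ⟨S.min' hS, ?_, ?_⟩
  all_goals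
    have h := S.min'_mem hS
    have h' : a (S.min' hS) + r (S.min' hS) = a m + r m := (Finset.mem_filter.1 h).2
    intro j
    rw [h']
  · exact hm j
  · intro hj
    exact S.min'_le j (by simp [S, hj])

lemma Ld_meas {N : ℕ} (a : Fin N → ℝ) (i : Fin N) : MeasurableSet {r | Ld a r i} := by
  unfold Ld
  simp only [Set.ofPred_and, Set.ofPred_forall]
  refine MeasurableSet.inter ?_ ?_
  · exact MeasurableSet.iInter fun j => measurableSet_le (by fun_prop) (by fun_prop)
  · refine MeasurableSet.iInter fun j => ?_
    by_cases h : i ≤ j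
    · simp [h]
    · simp only [h, imp_false]
      exact (measurableSet_eq_fun (by fun_prop) (by fun_prop)).compl

lemma J_meas {N : ℕ} (a : Fin N → ℝ) (J : (Fin N → ℝ) → Fin N) (hJ : ∀ r, Ld a r (J r)) :
    Measurable J := by
  refine measurable_to_countable' fun i => ?_
  convert Ld_meas a i using 1
  ext r
  simp only [Set.mem_preimage, Set.mem_singleton_iff, Set.mem_ofPred_eq]
  exact ⟨fun h => h ▸ hJ r, fun h => Ld_unique (hJ r) h⟩

lemma FJ_integrable {N : ℕ} {η : ℝ} (hη : 0 < η) {J : (Fin N → ℝ) → Fin N} (hJ : Measurable J)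
    (u : Fin N → ℝ) : Integrable (fun r => F η r * u (J r)) := by
  refine (F_integrable hη).mul_bdd (c := ∑ i, |u i|)
    ((measurable_of_countable u).comp hJ).aestronglyMeasurable (ae_of_all _ fun r => ?_)
  exact Finset.single_le_sum (f := fun i => |u i|) (fun i _ => abs_nonneg _) (Finset.mem_univ (J r))

lemma Ld_shift {N : ℕ} {a b r : Fin N → ℝ} (hab : ∀ i, a i ≤ b i) (hba : ∀ i, b i ≤ a i + 1)
    {i : Fin N} (h : Ld b r i) : Ld a (r + Pi.single i 1) i := by
  constructor
  · intro j
    by_cases hj : j = i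
    · rw [hj]
    · simp only [Pi.add_apply, Pi.single_eq_same, Pi.single_eq_of_ne hj]
      linarith [h.1 j, hab j, hba i]
  · intro j hj'
    by_cases hj : j = i
    · rw [hj]
    · simp only [Pi.add_apply, Pi.single_eq_same, Pi.single_eq_of_ne hj] at hj'
      exact h.2 j (by linarith [h.1 j, hab j, hba i])

lemma stab {N : ℕ} {η : ℝ} (hη : 0 < η) {a b : Fin N → ℝ}
    (hab : ∀ i, a i ≤ b i) (hba : ∀ i, b i ≤ a i + 1) {JA JB : (Fin N → ℝ) → Fin N}
    (hA : ∀ r, Ld a r (JA r)) (hB : ∀ r, Ld b r (JB r)) (u : Fin N → ℝ) (hu : ∀ i, 0 ≤ u i) :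
    Real.exp (-η) * ∫ r, F η r * u (JB r) ≤ ∫ r, F η r * u (JA r) := by
  have hmA := J_meas a JA hA
  have hmB := J_meas b JB hB
  have key : ∀ J : (Fin N → ℝ) → Fin N, Measurable J → ∫ r, F η r * u (J r)
      = ∑ i, u i * ∫ r, F η r * (if J r = i then 1 else 0) := by
    intro J hJ
    simp_rw [← integral_const_mul]
    rw [← integral_finsetSum]
    · congr 1; funext r
      simp [mul_comm]
    · intro i _
      exact (FJ_integrable hη hJ (fun j => if j = i then 1 else 0)).const_mul _
  rw [key JA hmA, key JB hmB, Finset.mul_sum]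
  refine Finset.sum_le_sum fun i _ => ?_
  rw [mul_left_comm]
  refine mul_le_mul_of_nonneg_left ?_ (hu i)
  rw [← integral_add_right_eq_self (fun r => F η r * (if JA r = i then (1:ℝ) else 0))
    (Pi.single i 1), ← integral_const_mul]
  refine integral_mono ((FJ_integrable hη hmB (fun j => if j = i then 1 else 0)).const_mul _)
    ((FJ_integrable hη hmA (fun j => if j = i then 1 else 0)).comp_add_right (Pi.single i 1)) ?_
  intro r
  dsimp only
  by_cases h : JB r = i
  · have h2 : JA (r + Pi.single i 1) = i :=
      Ld_unique (hA _) (Ld_shift hab hba (h ▸ hB r))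
    simp only [h, h2, if_true, mul_one]
    exact F_shift hη i r
  · simp only [h, if_false, mul_zero]
    split_ifs <;> simp [F_nonneg hη]

lemma FJ_le {N : ℕ} {η : ℝ} (hη : 0 < η) {J : (Fin N → ℝ) → Fin N} (hJ : Measurable J)
    (u : Fin N → ℝ) (hu : ∀ i, u i ≤ 1) : ∫ r, F η r * u (J r) ≤ 1 := by
  rw [← F_integral (N := N) hη]
  refine integral_mono (FJ_integrable hη hJ u) (F_integrable hη) fun r => ?_
  exact mul_le_of_le_one_right (F_nonneg hη r) (hu _)

lemma FJ_nonneg {N : ℕ} {η : ℝ} (hη : 0 < η) {J : (Fin N → ℝ) → Fin N}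
    (u : Fin N → ℝ) (hu : ∀ i, 0 ≤ u i) : 0 ≤ ∫ r, F η r * u (J r) :=
  integral_nonneg fun r => mul_nonneg (F_nonneg hη r) (hu _)

/-- Upper bound for the maximal perturbation. -/
noncomputable def B {N : ℕ} (η : ℝ) (r : Fin N → ℝ) : ℝ :=
  (2 / η) * (Real.log N + ∑ i, Real.exp (η * r i / 2) / N)

lemma le_B {N : ℕ} (hN : 2 ≤ N) {η : ℝ} (hη : 0 < η) (r : Fin N → ℝ) (i : Fin N) :
    r i ≤ B η r := by
  have hN' : (0:ℝ) < N := by positivity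
  have h1 : Real.exp (η * r i / 2) / N ≤ ∑ i, Real.exp (η * r i / 2) / N :=
    Finset.single_le_sum (f := fun i => Real.exp (η * r i / 2) / N)
      (fun i _ => by positivity) (Finset.mem_univ i)
  have h2 := Real.log_le_sub_one_of_pos (x := Real.exp (η * r i / 2) / N) (by positivity)
  rw [Real.log_div (by positivity) (by positivity), Real.log_exp] at h2
  have h3 : η * r i / 2 ≤ Real.log N + ∑ i, Real.exp (η * r i / 2) / N := by linarith
  unfold B
  calc r i = (2 / η) * (η * r i / 2) := by field_simp
    _ ≤ _ := mul_le_mul_of_nonneg_left h3 (by positivity)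

lemma FB_eq {N : ℕ} (η : ℝ) (r : Fin N → ℝ) : F η r * B η r
    = (2 / η) * (F η r * Real.log N + ∑ i, (F η r * Real.exp (η * r i / 2)) / N) := by
  unfold B
  rw [mul_left_comm, mul_add, Finset.mul_sum]
  simp only [mul_div_assoc]

lemma FB_integrable {N : ℕ} {η : ℝ} (hη : 0 < η) :
    Integrable (fun r : Fin N → ℝ => F η r * B η r) := by
  simp_rw [FB_eq]
  exact (((F_integrable hη).mul_const _).add (integrable_finsetSum _ fun i _ =>
    (F_exp_integrable hη i).div_const _)).const_mul _

lemma FB_integral {N : ℕ} (hN : 2 ≤ N) {η : ℝ} (hη : 0 < η) :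
    ∫ r : Fin N → ℝ, F η r * B η r = (2 / η) * (Real.log N + 2) := by
  simp_rw [FB_eq]
  rw [integral_const_mul, integral_add ((F_integrable hη).mul_const _)
    (integrable_finsetSum _ fun i _ => (F_exp_integrable hη i).div_const _),
    integral_finsetSum _ (fun i _ => (F_exp_integrable hη i).div_const _),
    integral_mul_const, F_integral hη]
  simp_rw [integral_div, F_exp_integral hη]
  have hN' : (N:ℝ) ≠ 0 := by positivity
  simp [mul_div_cancel₀ _ hN']

lemma btl {N : ℕ} (l : ℕ → Fin N → ℝ) (J : ℕ → Fin N) (r : Fin N → ℝ) (b : ℝ)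
    (hb : ∀ i, r i ≤ b)
    (hJ : ∀ n, Ld (fun i => ∑ s ∈ Finset.range n, l s i) r (J n)) (n : ℕ) :
    ∀ i, (∑ s ∈ Finset.range n, l s i) + r i
      ≤ b + ∑ s ∈ Finset.range n, l s (J (s+1)) := by
  induction n with
  | zero => intro i; simpa using hb i
  | succ n ih =>
    intro i
    have h1 := (hJ (n+1)).1 i
    have h2 := ih (J (n+1))
    simp only [Finset.sum_range_succ] at h1 ⊢
    linarith

lemma main {N : ℕ} (hN : 2 ≤ N) {η : ℝ} (hη : 0 < η) (T : ℕ) (l : ℕ → Fin N → ℝ)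
    (h0 : ∀ t i, 0 ≤ l t i) (h1 : ∀ t i, l t i ≤ 1) (J : ℕ → (Fin N → ℝ) → Fin N)
    (hJ : ∀ n r, Ld (fun i => ∑ s ∈ Finset.range n, l s i) r (J n r))
    (M : ℝ) (hM : ∃ i, M = ∑ s ∈ Finset.range T, l s i) :
    ∫ r, F η r * (M - ∑ t ∈ Finset.range T, l t (J t r))
      ≤ (2 / η) * (Real.log N + 2) + T * η := by
  have hm : ∀ n, Measurable (J n) := fun n => J_meas _ _ (hJ n)
  have i1 : ∀ t k, Integrable (fun r => F η r * l t (J k r)) :=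
    fun t k => FJ_integrable hη (hm k) _
  have hle : ∫ r, F η r * (M - ∑ t ∈ Finset.range T, l t (J t r))
      ≤ ∫ r, (F η r * B η r + ∑ t ∈ Finset.range T,
        (F η r * l t (J (t+1) r) - F η r * l t (J t r))) := by
    refine integral_mono ?_ ((FB_integrable hη).add (integrable_finsetSum _ fun t _ =>
      (i1 t (t+1)).sub (i1 t t))) ?_
    · simp_rw [mul_sub, Finset.mul_sum]
      exact ((F_integrable hη).mul_const _).sub (integrable_finsetSum _ fun t _ => i1 t t)
    · intro r
      dsimp only
      rw [Finset.sum_sub_distrib, ← Finset.mul_sum, ← Finset.mul_sum, ← mul_sub, ← mul_add]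
      by_cases hr : ∀ i, 0 ≤ r i
      · refine mul_le_mul_of_nonneg_left ?_ (F_nonneg hη r)
        obtain ⟨i, rfl⟩ := hM
        have := btl l (fun n => J n r) r (B η r) (le_B hN hη r) (fun n => hJ n r) T i
        linarith [hr i]
      · push Not at hr
        obtain ⟨i, hi⟩ := hr
        have : F η r = 0 := Finset.prod_eq_zero (Finset.mem_univ i) (by simp [g, hi])
        simp [this]
  refine hle.trans ?_
  have i2 : ∀ t ∈ Finset.range T,
      Integrable (fun r => F η r * l t (J (t+1) r) - F η r * l t (J t r)) :=
    fun t _ => (i1 t (t+1)).sub (i1 t t)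
  rw [integral_add (FB_integrable hη) (integrable_finsetSum _ i2), FB_integral hN hη,
      integral_finsetSum _ i2]
  gcongr
  have : ∀ t ∈ Finset.range T,
      ∫ r, (F η r * l t (J (t+1) r) - F η r * l t (J t r)) ≤ η := by
    intro t _
    rw [integral_sub (i1 _ _) (i1 _ _)]
    have hs := stab hη (a := fun i => ∑ s ∈ Finset.range t, l s i)
      (b := fun i => ∑ s ∈ Finset.range (t+1), l s i)
      (fun i => by simp only [Finset.sum_range_succ]; linarith [h0 t i])
      (fun i => by simp only [Finset.sum_range_succ]; linarith [h1 t i])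
      (hJ t) (hJ (t+1)) (l t) (h0 t)
    have hx := FJ_le hη (hm (t+1)) (l t) (h1 t)
    have hx0 := FJ_nonneg (J := J (t+1)) hη (l t) (h0 t)
    have he := Real.add_one_le_exp (-η)
    nlinarith
  simpa using Finset.sum_le_sum this

lemma conv {N : ℕ} {η : ℝ} (hη : 0 < η) (X : (Fin N → ℝ) → ℝ) :
    ∫ rv, X rv ∂(MeasureTheory.volume.withDensity
              (fun rv : Fin N → ℝ =>
                ∏ i, ENNReal.ofReal (if 0 ≤ rv i then η * Real.exp (-η * rv i) else 0)))
      = ∫ rv, F η rv * X rv := by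
  have : (fun rv : Fin N → ℝ =>
      ∏ i, ENNReal.ofReal (if 0 ≤ rv i then η * Real.exp (-η * rv i) else 0))
      = fun rv => ENNReal.ofReal (F η rv) := by
    funext rv
    rw [F, ENNReal.ofReal_prod_of_nonneg (fun i _ => g_nonneg hη _ _)]
    rfl
  rw [this, integral_withDensity_eq_integral_toReal_smul (F_meas η).ennreal_ofReal
    (ae_of_all _ fun _ => ENNReal.ofReal_lt_top)]
  simp_rw [ENNReal.toReal_ofReal (F_nonneg hη _), smul_eq_mul]

end FPL

/-- Follow-the-Perturbed-Leader with i.i.d. exponential perturbations of rate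
`η = min 1 √(log N / T)` achieves `O(√(T log N))` expected external regret
against any oblivious sequence of payoff vectors in `[0,1]^N`: there is an
absolute constant `C > 0` bounding the expected regret by `C·√(T·log N)`.
Here `I t rv` is the smallest index attaining the maximum of the perturbed
cumulative payoff `∑_{s<t} ℓ s + rv`, and the expectation is taken over the
product measure on `Fin N → ℝ` with density `∏ i, η·exp(−η·rv i)` on the
nonnegative orthant. -/
theorem stmt_15 :
    ∃ C : ℝ, 0 < C ∧
      ∀ (N T : ℕ), 2 ≤ N → 1 ≤ T →
      ∀ ℓ : Fin T → Fin N → ℝ, (∀ t i, 0 ≤ ℓ t i ∧ ℓ t i ≤ 1) →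
      ∀ η : ℝ, η = min 1 (Real.sqrt (Real.log N / T)) →
      ∀ I : Fin T → (Fin N → ℝ) → Fin N,
        (∀ (t : Fin T) (rv : Fin N → ℝ),
          (∀ i : Fin N,
            (∑ s ∈ Finset.univ.filter (fun s => s < t), ℓ s i) + rv i
              ≤ (∑ s ∈ Finset.univ.filter (fun s => s < t), ℓ s (I t rv)) + rv (I t rv)) ∧
          (∀ i : Fin N,
            (∑ s ∈ Finset.univ.filter (fun s => s < t), ℓ s i) + rv i
              = (∑ s ∈ Finset.univ.filter (fun s => s < t), ℓ s (I t rv)) + rv (I t rv) →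
            I t rv ≤ i)) →
      ∫ rv, ((⨆ i : Fin N, ∑ t, ℓ t i) - ∑ t, ℓ t (I t rv))
          ∂(MeasureTheory.volume.withDensity
              (fun rv : Fin N → ℝ =>
                ∏ i, ENNReal.ofReal (if 0 ≤ rv i then η * Real.exp (-η * rv i) else 0)))
        ≤ C * Real.sqrt (T * Real.log N) := by
  refine ⟨11, by norm_num, ?_⟩
  intro N T hN hT ℓ hℓ η hηe I hI
  have hN' : (2:ℝ) ≤ N := by exact_mod_cast hN
  have hT' : (1:ℝ) ≤ T := by exact_mod_cast hT
  have hlog2 : (1/2 : ℝ) ≤ Real.log N := by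
    have h1 := Real.log_two_gt_d9
    have h2 := Real.log_le_log (by norm_num) hN'
    linarith
  have hη : 0 < η := by
    rw [hηe]
    exact lt_min one_pos (Real.sqrt_pos.2 (by positivity))
  haveI : Nonempty (Fin N) := ⟨⟨0, by omega⟩⟩
  rw [FPL.conv hη]
  let l : ℕ → Fin N → ℝ := fun n i => if h : n < T then ℓ ⟨n, h⟩ i else 0
  have hl : ∀ (t : Fin T) i, l t i = ℓ t i := fun t i => by simp [l]
  have h0 : ∀ t i, 0 ≤ l t i := by
    intro t i; simp only [l]; split_ifs with h
    · exact (hℓ _ _).1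
    · exact le_rfl
  have h1 : ∀ t i, l t i ≤ 1 := by
    intro t i; simp only [l]; split_ifs with h
    · exact (hℓ _ _).2
    · exact zero_le_one
  have hsum : ∀ i, ∑ t, ℓ t i = ∑ s ∈ Finset.range T, l s i := by
    intro i
    rw [Finset.sum_range]
    exact Finset.sum_congr rfl fun t _ => (hl t i).symm
  have hpart : ∀ (t : Fin T) i, ∑ s ∈ Finset.univ.filter (fun s => s < t), ℓ s i
      = ∑ s ∈ Finset.range t, l s i := by
    intro t i
    refine Finset.sum_bij (fun s _ => (s : ℕ)) ?_ ?_ ?_ ?_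
    · intro s hs; simpa using hs
    · intro s _ s' _ h; exact Fin.ext h
    · intro n hn
      have hn' := Finset.mem_range.1 hn
      exact ⟨⟨n, hn'.trans t.2⟩, Finset.mem_filter.2 ⟨Finset.mem_univ _, hn'⟩, rfl⟩
    · intro s _; exact (hl s i).symm
  choose J hJ using fun (n : ℕ) (r : Fin N → ℝ) =>
    FPL.Ld_exists (by omega : 0 < N) (fun i => ∑ s ∈ Finset.range n, l s i) r
  have hIJ : ∀ (t : Fin T) r, I t r = J t r := by
    intro t r
    refine FPL.Ld_unique (a := fun i => ∑ s ∈ Finset.range t, l s i) (r := r) ?_ (hJ t r)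
    have := hI t r
    simp only [hpart] at this
    exact this
  have hX : ∀ r, ∑ t, ℓ t (I t r) = ∑ t ∈ Finset.range T, l t (J t r) := by
    intro r
    rw [Finset.sum_range]
    exact Finset.sum_congr rfl fun t _ => by rw [hl, hIJ]
  obtain ⟨im, him⟩ := exists_eq_ciSup_of_finite (f := fun i : Fin N => ∑ t, ℓ t i)
  simp_rw [hX]
  rw [← him]
  rw [hsum im]
  have hsq : Real.sqrt (T * Real.log N) = Real.sqrt T * Real.sqrt (Real.log N) :=
    Real.sqrt_mul (by positivity) _
  have hst : Real.sqrt T * Real.sqrt T = T := Real.mul_self_sqrt (by positivity)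
  have hsl : Real.sqrt (Real.log N) * Real.sqrt (Real.log N) = Real.log N :=
    Real.mul_self_sqrt (by positivity)
  have hstp : 0 < Real.sqrt T := Real.sqrt_pos.2 (by positivity)
  have hslp : 0 < Real.sqrt (Real.log N) := Real.sqrt_pos.2 (by positivity)
  rcases le_total 1 (Real.sqrt (Real.log N / T)) with hc | hc
  · have hTl : Real.sqrt T ≤ Real.sqrt (Real.log N) := by
      rw [Real.sqrt_div (by positivity), le_div_iff₀ hstp, one_mul] at hc
      exact hc
    calc _ ≤ ∫ r : Fin N → ℝ, FPL.F η r * (T:ℝ) := by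
          have hm : ∀ n, Measurable (J n) := fun n => FPL.J_meas _ _ (hJ n)
          refine integral_mono ?_ ((FPL.F_integrable hη).mul_const _) ?_
          · simp_rw [mul_sub, Finset.mul_sum]
            exact (integrable_finsetSum _ fun t _ => (FPL.F_integrable hη).mul_const _).sub (integrable_finsetSum _ fun t _ =>
              FPL.FJ_integrable hη (hm t) (l t))
          · intro r
            refine mul_le_mul_of_nonneg_left ?_ (FPL.F_nonneg hη r)
            have a1 : ∑ s ∈ Finset.range T, l s im ≤ T := by
              simpa using Finset.sum_le_sum (s := Finset.range T) fun t _ => h1 t im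
            have a2 : 0 ≤ ∑ t ∈ Finset.range T, l t (J t r) :=
              Finset.sum_nonneg fun t _ => h0 _ _
            linarith
      _ = T := by rw [integral_mul_const, FPL.F_integral hη, one_mul]
      _ ≤ _ := by rw [hsq]; nlinarith
  · rw [min_eq_right hc, Real.sqrt_div (by positivity)] at hηe
    refine (FPL.main hN hη T l h0 h1 J hJ _ ⟨im, rfl⟩).trans ?_
    have e1 : (T:ℝ) * η = Real.sqrt T * Real.sqrt (Real.log N) := by
      rw [hηe]; field_simp; rw [sq, hst]
    have e2 : Real.log N / η = Real.sqrt T * Real.sqrt (Real.log N) := by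
      rw [hηe]; field_simp; rw [sq, hsl]
    have e3 : (2 / η) * (Real.log N + 2) ≤ 10 * (Real.log N / η) := by
      rw [div_mul_eq_mul_div, ← mul_div_assoc]
      exact div_le_div_of_nonneg_right (by linarith) hη.le
    rw [hsq]; linarith
end
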